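/- arXiv:1908.08915 — 2 statements merged into one kernel-verified Lean document; each statement's English description precedes it below -/
import Mathlib

section
/- (Triviality, nondivergent form) Let p ∈ (1,∞), l ∈ (0,p), n ∈ [1,∞) real, R ∈ (0,∞]. Let φ : ℝ → ℝ be continuous and odd with τφ(τ) > 0 for a.e. τ. Let a be locally absolutely continuous on [0,R) with a > 0 a.e., let δ_a(τ) := (n−1)a(τ)/τ − (1−1/p)a'(τ) satisfy δ_a > 0 a.e. with δ_a and δ_a^{−1/(p−1)} locally integrable on [0,R). Let h : (0,R) × ℝ² → ℝ be a Carathéodory function such that for some θ ∈ (0,1] and a non-negative measurable q locally integrable on [0,R): h(τ,λ₀,λ₁)λ₁ ≤ θ q(τ)|λ₀|^l |λ₁|^{p−l} + (1−θ) δ_a(τ)|λ₁|^p for all λ₀, λ₁ ∈ ℝ and a.e. τ. Assume K(0,r,q,δ_a) < ∞ for every r ∈ (0,R). Let u be locally absolutely continuous on (0,R) with Φ_p(u') locally absolutely continuous on [0,R), u(0) = 0, and suppose u solves the nondivergent ODE: a(τ)(Φ_p(u'(τ)))' + (n−1)(a(τ)/τ)Φ_p(u'(τ)) − h(τ,u(τ),u'(τ))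 + φ(u(τ)) = 0 for a.e. τ ∈ (0,R). If a(0) = 0 or u'(0) = 0, then u ≡ 0 on [0,R). -/
open MeasureTheory Set Filter
open scoped ENNReal

/-- `Φ_p(λ) = |λ|^{p-2} λ` for `λ ≠ 0`, and `Φ_p(0) = 0`. -/
noncomputable def PhiP (p x : ℝ) : ℝ := if x = 0 then 0 else |x| ^ (p - 2) * x

/-- `u` is absolutely continuous on `[s,t]` with a.e. derivative `u'`:
`u'` is integrable on `[s,t]` and the fundamental theorem of calculus holds. -/
def ACOn (u u' : ℝ → ℝ) (s t : ℝ) : Prop :=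
  MeasureTheory.IntegrableOn u' (Set.Icc s t) ∧
    ∀ x ∈ Set.Icc s t, u x = u s + ∫ σ in s..x, u' σ

/-- The Beesack–Das constant
`K(s,·,q,v) = ((p-l)/p)^{(p-l)/p} [∫_S q(t)^{p/l} v(t)^{-(p-l)/l}
  (∫_s^t v(σ)^{-1/(p-1)} dσ)^{p-1} dt]^{l/p}`, over a set `S`. -/
noncomputable def BDK (p l : ℝ) (q v : ℝ → ℝ) (s : ℝ) (S : Set ℝ) : ℝ≥0∞ :=
  ENNReal.ofReal (((p - l) / p) ^ ((p - l) / p)) *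
    (∫⁻ t in S,
      ENNReal.ofReal (q t) ^ (p / l) * ENNReal.ofReal (v t) ^ (-((p - l) / l)) *
        (∫⁻ σ in Set.Ioc s t, ENNReal.ofReal (v σ) ^ (-(1 / (p - 1)))) ^ (p - 1)) ^ (l / p)

/-- `δ_a(τ) = (n-1) a(τ)/τ - (1 - 1/p) a'(τ)`. -/
noncomputable def deltaA (n p : ℝ) (a a' : ℝ → ℝ) : ℝ → ℝ :=
  fun τ => (n - 1) * a τ / τ - (1 - 1 / p) * a' τ

/-- `d_a(τ) = (n-1) a(τ)/τ + (1/p) a'(τ)`. -/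
noncomputable def dA (n p : ℝ) (a a' : ℝ → ℝ) : ℝ → ℝ :=
  fun τ => (n - 1) * a τ / τ + (1 / p) * a' τ


lemma PhiP_abs {p x : ℝ} (hp : 1 < p) : |PhiP p x| = |x| ^ (p - 1) := by
  unfold PhiP
  split_ifs with hx
  · subst hx
    rw [abs_zero, Real.zero_rpow (by linarith)]
  · have hx' : 0 < |x| := abs_pos.mpr hx
    rw [abs_mul, abs_of_nonneg (Real.rpow_nonneg hx'.le _)]
    conv_lhs => rw [← Real.rpow_one |x|, Real.rpow_one |x|]
    rw [show p - 1 = (p - 2) + 1 by ring, Real.rpow_add hx', Real.rpow_one]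

lemma PhiP_mul {p x : ℝ} (hp : 1 < p) : PhiP p x * x = |x| ^ p := by
  unfold PhiP
  split_ifs with hx
  · subst hx
    rw [abs_zero, Real.zero_rpow (by linarith)]; simp
  · have hx' : 0 < |x| := abs_pos.mpr hx
    rw [mul_assoc, ← abs_mul_abs_self x]
    conv_rhs => rw [show p = (p - 2) + 1 + 1 by ring, Real.rpow_add hx', Real.rpow_add hx', Real.rpow_one]
    ring

lemma PhiP_abs_rpow {p x : ℝ} (hp : 1 < p) : |PhiP p x| ^ (p / (p - 1)) = |x| ^ p := by
  rw [PhiP_abs hp, ← Real.rpow_mul (abs_nonneg _)]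
  congr 1
  have : p - 1 ≠ 0 := by linarith
  field_simp

lemma PhiP_inv {p x : ℝ} (hp : 1 < p) :
    |PhiP p x| ^ (p / (p - 1) - 2) * PhiP p x = x := by
  have h1 : p - 1 ≠ 0 := by linarith
  rw [PhiP_abs hp]
  unfold PhiP
  split_ifs with hx
  · simp [hx]
  · have hx' : 0 < |x| := abs_pos.mpr hx
    rw [← Real.rpow_mul hx'.le, ← mul_assoc, ← Real.rpow_add hx']
    rw [show (p - 1) * (p / (p - 1) - 2) + (p - 2) = 0 by field_simp; ring]
    simp

lemma one_lt_conj {p : ℝ} (hp : 1 < p) : 1 < p / (p - 1) := by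
  rw [lt_div_iff₀ (by linarith)]; linarith

/-- `x ↦ |x|^(s-2) x` is continuous. -/
lemma continuous_abs_rpow_mul {s : ℝ} (hs : 1 < s) :
    Continuous (fun x : ℝ => |x| ^ (s - 2) * x) := by
  have h1 : ContDiff ℝ 1 (fun x : ℝ => ‖x‖ ^ s) := contDiff_norm_rpow hs
  have h2 := h1.continuous_deriv le_rfl
  have h3 : deriv (fun x : ℝ => ‖x‖ ^ s) = fun x => s * (|x| ^ (s - 2) * x) := by
    funext x
    rw [(hasDerivAt_norm_rpow x hs).deriv, Real.norm_eq_abs]; ring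
  rw [h3] at h2
  have h4 : (fun x : ℝ => |x| ^ (s - 2) * x) = fun x => s⁻¹ * (s * (|x| ^ (s - 2) * x)) := by
    funext x
    have : s ≠ 0 := by linarith
    field_simp
  rw [h4]
  exact continuous_const.mul h2

lemma ac_congr {f g : ℝ → ℝ} {a b : ℝ} (hf : AbsolutelyContinuousOnInterval f a b)
    (h : ∀ x ∈ uIcc a b, f x = g x) : AbsolutelyContinuousOnInterval g a b := by
  rw [absolutelyContinuousOnInterval_iff] at hf ⊢
  intro ε hε
  obtain ⟨d, hd, H⟩ := hf ε hε
  refine ⟨d, hd, fun E hE hs => ?_⟩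
  refine lt_of_eq_of_lt (Finset.sum_congr rfl fun i hi => ?_) (H E hE hs)
  rw [h _ (hE.1 i hi).1, h _ (hE.1 i hi).2]

lemma ac_comp {f g : ℝ → ℝ} {a b : ℝ} (hf : AbsolutelyContinuousOnInterval f a b)
    (hg : ContDiff ℝ 1 g) : AbsolutelyContinuousOnInterval (fun x => g (f x)) a b := by
  obtain ⟨C, hC⟩ := hf.exists_bound
  obtain ⟨K, hK⟩ := (hg.contDiffOn (s := Icc (-C) C)).exists_lipschitzOnWith (by decide)
    (convex_Icc _ _) isCompact_Icc
  rw [absolutelyContinuousOnInterval_iff] at hf ⊢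
  intro ε hε
  have hK0 : (0 : ℝ) ≤ K := K.2
  obtain ⟨d, hd, H⟩ := hf (ε / (K + 1)) (by positivity)
  refine ⟨d, hd, fun E hE hs => ?_⟩
  have hH := H E hE hs
  have h1 : ∑ i ∈ Finset.range E.1, dist (g (f (E.2 i).1)) (g (f (E.2 i).2)) ≤
      K * ∑ i ∈ Finset.range E.1, dist (f (E.2 i).1) (f (E.2 i).2) := by
    rw [Finset.mul_sum]
    refine Finset.sum_le_sum fun i hi => ?_
    have e1 := hC _ (hE.1 i hi).1
    have e2 := hC _ (hE.1 i hi).2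
    rw [Real.norm_eq_abs, abs_le] at e1 e2
    exact hK.dist_le_mul _ e1 _ e2
  have hS : 0 ≤ ∑ i ∈ Finset.range E.1, dist (f (E.2 i).1) (f (E.2 i).2) :=
    Finset.sum_nonneg fun _ _ => dist_nonneg
  rw [lt_div_iff₀ (by positivity)] at hH
  nlinarith

lemma ACOn.ac {f f' : ℝ → ℝ} {r : ℝ} (hr : 0 < r) (h : ACOn f f' 0 r) :
    AbsolutelyContinuousOnInterval f 0 r := by
  have hi : IntervalIntegrable f' volume 0 r :=
    (intervalIntegrable_iff_integrableOn_Icc_of_le hr.le).mpr h.1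
  have h1 := hi.absolutelyContinuousOnInterval_intervalIntegral (c := 0) (by simp)
  have h2 : AbsolutelyContinuousOnInterval (fun _ : ℝ => f 0) 0 r :=
    (contDiff_const.contDiffOn).absolutelyContinuousOnInterval
  refine ac_congr (h2.fun_add h1) fun x hx => ?_
  rw [uIcc_of_le hr.le] at hx
  exact (h.2 x hx).symm

lemma ACOn.deriv {f f' : ℝ → ℝ} {r : ℝ} (hr : 0 < r) (h : ACOn f f' 0 r) :
    ∀ᵐ x ∂(volume.restrict (Ioc 0 r)), HasDerivAt f (f' x) x := by
  have hi : IntervalIntegrable f' volume 0 r :=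
    (intervalIntegrable_iff_integrableOn_Icc_of_le hr.le).mpr h.1
  rw [ae_restrict_iff' measurableSet_Ioc]
  have h₂ : ∀ᵐ x : ℝ, x ≠ r := by simp [ae_iff, measure_singleton]
  filter_upwards [hi.ae_hasDerivAt_integral, h₂] with x hx hxr hx0
  have hx' : x ∈ Ioo 0 r := ⟨hx0.1, lt_of_le_of_ne hx0.2 hxr⟩
  rw [uIcc_of_le hr.le] at hx
  have := (hx ⟨hx'.1.le, hx'.2.le⟩ 0 ⟨le_rfl, hr.le⟩).const_add (f 0)
  refine this.congr_of_eventuallyEq ?_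
  filter_upwards [Ioo_mem_nhds hx'.1 hx'.2] with y hy
  exact h.2 y ⟨hy.1.le, hy.2.le⟩

lemma F_pos {φ : ℝ → ℝ} (hφ : Continuous φ)
    (hs : ∀ᵐ τ ∂(volume : Measure ℝ), 0 < τ * φ τ) {t : ℝ} (ht : t ≠ 0) :
    0 < ∫ s in (0:ℝ)..t, φ s := by
  rcases lt_or_gt_of_ne ht with h | h
  · rw [intervalIntegral.integral_symm, ← intervalIntegral.integral_neg]
    have h0 : 0 ≤ᵐ[volume.restrict (Ioc t 0)] fun x => -φ x := by
      filter_upwards [ae_restrict_mem measurableSet_Ioc, ae_restrict_of_ae hs] with x hx hx2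
      show (0 : ℝ) ≤ - φ x
      by_contra hc
      nlinarith [hx.2]
    rw [intervalIntegral.integral_pos_iff_support_of_nonneg_ae' (f := fun x => -φ x)
      (by rwa [uIoc_of_le h.le]) (hφ.neg.intervalIntegrable _ _)]
    refine ⟨h, ?_⟩
    have : volume (Function.support (fun x => -φ x) ∩ Ioc t 0) = volume (Ioc t 0) := by
      apply measure_congr
      filter_upwards [hs] with x hx
      have : φ x ≠ 0 := by rintro h0; simp [h0] at hx
      apply propext
      show (_ ∧ _) ↔ _
      simp [Function.mem_support, this]
      rfl
    rw [this]; simpa using h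
  · have h0 : 0 ≤ᵐ[volume.restrict (Ioc 0 t)] φ := by
      filter_upwards [ae_restrict_mem measurableSet_Ioc, ae_restrict_of_ae hs] with x hx hx2
      show (0 : ℝ) ≤ φ x
      by_contra hc
      nlinarith [hx.1]
    rw [intervalIntegral.integral_pos_iff_support_of_nonneg_ae' (by rwa [uIoc_of_le h.le])
      (hφ.intervalIntegrable _ _)]
    refine ⟨h, ?_⟩
    have : volume (Function.support φ ∩ Ioc 0 t) = volume (Ioc 0 t) := by
      apply measure_congr
      filter_upwards [hs] with x hx
      have : φ x ≠ 0 := by rintro h0; simp [h0] at hx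
      apply propext
      show (_ ∧ _) ↔ _
      simp [Function.mem_support, this]
      rfl
    rw [this]; simpa using h

/-- Continuous and a.e. positive implies nonnegative on the closed interval. -/
lemma nonneg_of_ae_pos {a : ℝ → ℝ} {r : ℝ} (hr : 0 < r) (hc : ContinuousOn a (Icc 0 r))
    (h : ∀ᵐ x ∂(volume.restrict (Ioc 0 r)), 0 < a x) : 0 ≤ a r := by
  by_contra hneg
  push Not at hneg
  have h1 : ∀ᶠ x in nhdsWithin r (Icc 0 r), a x < 0 :=
    (hc r ⟨hr.le, le_rfl⟩).eventually (gt_mem_nhds hneg)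
  have h2 : ∀ᶠ x in nhdsWithin r (Iio r), a x < 0 := by
    rw [← nhdsWithin_Ioo_eq_nhdsLT hr]
    exact h1.filter_mono (nhdsWithin_mono _ Ioo_subset_Icc_self)
  obtain ⟨c, hc1, hc2⟩ := (mem_nhdsLT_iff_exists_Ioo_subset' hr).mp h2
  have hmax : max c 0 < r := max_lt hc1 hr
  rw [ae_restrict_iff' measurableSet_Ioc] at h
  have h3 : volume (Ioo (max c 0) r) = 0 := by
    refine measure_mono_null (fun x hx => ?_) h
    intro hx2
    have e1 : c < x := lt_of_le_of_lt (le_max_left _ _) hx.1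
    have e2 : 0 < x := lt_of_le_of_lt (le_max_right _ _) hx.1
    have e3 : a x < 0 := hc2 ⟨e1, hx.2⟩
    have := hx2 ⟨e2, hx.2.le⟩
    linarith
  have hc3 : c < r := hc1
  simp at h3
  rcases h3 with h3 | h3 <;> linarith

lemma uprime_cont {p r : ℝ} {u' v' : ℝ → ℝ} (hp : 1 < p) (hr : 0 < r)
    (hvAC : ACOn (fun τ => PhiP p (u' τ)) v' 0 r) : ContinuousOn u' (Icc 0 r) := by
  have h1 := (hvAC.ac hr).continuousOn
  rw [uIcc_of_le hr.le] at h1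
  have h2 := (continuous_abs_rpow_mul (one_lt_conj hp)).comp_continuousOn h1
  refine h2.congr fun x _ => ?_
  exact (PhiP_inv hp).symm

lemma ac_cont {f f' : ℝ → ℝ} {r : ℝ} (hr : 0 < r) (h : ACOn f f' 0 r) :
    ContinuousOn f (Icc 0 r) := by
  have h1 := (h.ac hr).continuousOn
  rwa [uIcc_of_le hr.le] at h1

lemma integrableOn_mul_cont {d f : ℝ → ℝ} {r : ℝ} (hd : IntegrableOn d (Ioc 0 r))
    (hf : ContinuousOn f (Icc 0 r)) : IntegrableOn (fun t => d t * f t) (Ioc 0 r) := by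
  rw [← integrableOn_Icc_iff_integrableOn_Ioc] at hd ⊢
  exact hd.mul_continuousOn hf isCompact_Icc

lemma cont_abs_rpow {f : ℝ → ℝ} {r s : ℝ} (hs : 0 < s) (hf : ContinuousOn f (Icc 0 r)) :
    ContinuousOn (fun t => |f t| ^ s) (Icc 0 r) :=
  hf.abs.rpow_const fun _ _ => Or.inr hs.le

lemma energy {p l n r θ : ℝ} (hp : 1 < p) (hl0 : 0 < l) (hlp : l < p) (hr : 0 < r)
    {φ : ℝ → ℝ} (hφcont : Continuous φ) {a a' q : ℝ → ℝ} (haAC : ACOn a a' 0 r)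
    (hvint : IntegrableOn (deltaA n p a a') (Ioc 0 r))
    (hqint : IntegrableOn q (Ioc 0 r))
    {h : ℝ → ℝ → ℝ → ℝ} {u u' v' : ℝ → ℝ}
    (hgrowth : ∀ᵐ τ ∂(volume.restrict (Ioc 0 r)),
      ∀ lam₀ lam₁ : ℝ, h τ lam₀ lam₁ * lam₁ ≤
        θ * q τ * |lam₀| ^ l * |lam₁| ^ (p - l) + (1 - θ) * deltaA n p a a' τ * |lam₁| ^ p)
    (huAC : ACOn u u' 0 r)
    (hvAC : ACOn (fun τ => PhiP p (u' τ)) v' 0 r)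
    (hu0 : u 0 = 0)
    (hODE : ∀ᵐ τ ∂(volume.restrict (Ioc 0 r)),
      a τ * v' τ + (n - 1) * (a τ / τ) * PhiP p (u' τ)
        - h τ (u τ) (u' τ) + φ (u τ) = 0)
    (hdeg : a 0 = 0 ∨ u' 0 = 0) :
    (1 - 1 / p) * (a r * |u' r| ^ p) + (∫ s in (0:ℝ)..u r, φ s)
      + θ * ∫ τ in Ioc 0 r, deltaA n p a a' τ * |u' τ| ^ p
      ≤ θ * ∫ τ in Ioc 0 r, q τ * (|u τ| ^ l * |u' τ| ^ (p - l)) := by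
  have hp0 : p ≠ 0 := by linarith
  have hp1 : p - 1 ≠ 0 := by linarith
  set F : ℝ → ℝ := fun t => ∫ s in (0:ℝ)..t, φ s with hF
  have hFd : ∀ t, HasDerivAt F (φ t) t := fun t =>
    intervalIntegral.integral_hasDerivAt_right (hφcont.intervalIntegrable _ _)
      hφcont.stronglyMeasurable.stronglyMeasurableAtFilter hφcont.continuousAt
  have hFC : ContDiff ℝ 1 F := by
    rw [contDiff_one_iff_deriv]
    refine ⟨fun t => (hFd t).differentiableAt, ?_⟩
    rw [show deriv F = φ from funext fun t => (hFd t).deriv]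
    exact hφcont
  have hNC : ContDiff ℝ 1 (fun x : ℝ => ‖x‖ ^ (p / (p - 1))) := contDiff_norm_rpow (one_lt_conj hp)
  set H : ℝ → ℝ := fun τ => (1 - 1 / p) * (a τ * ‖PhiP p (u' τ)‖ ^ (p / (p - 1))) + F (u τ) with hH
  have hHac : AbsolutelyContinuousOnInterval H 0 r :=
    (((haAC.ac hr).fun_mul (ac_comp (hvAC.ac hr) hNC)).const_mul (1 - 1 / p)).fun_add
      (ac_comp (huAC.ac hr) hFC)
  have hHval : ∀ τ, H τ = (1 - 1 / p) * (a τ * |u' τ| ^ p) + F (u τ) := fun τ => by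
    simp only [hH, Real.norm_eq_abs, PhiP_abs_rpow hp]
  have hH0 : H 0 = 0 := by
    rw [hHval, hu0]
    have : F 0 = 0 := by simp [hF]
    rw [this]
    rcases hdeg with h0 | h0
    · simp [h0]
    · rw [h0, abs_zero, Real.zero_rpow hp0]; simp
  have hFTC := hHac.integral_deriv_eq_sub
  rw [hH0, sub_zero, hHval, intervalIntegral.integral_of_le hr.le] at hFTC
  have hHint : IntegrableOn (deriv H) (Ioc 0 r) := by
    have := hHac.intervalIntegrable_deriv
    rwa [intervalIntegrable_iff_integrableOn_Ioc_of_le hr.le] at this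
  have cu := ac_cont hr huAC
  have cu' := uprime_cont hp hr hvAC
  have i1 : IntegrableOn (fun τ => deltaA n p a a' τ * |u' τ| ^ p) (Ioc 0 r) :=
    integrableOn_mul_cont hvint (cont_abs_rpow (by linarith) cu')
  have i2 : IntegrableOn (fun τ => q τ * (|u τ| ^ l * |u' τ| ^ (p - l))) (Ioc 0 r) :=
    integrableOn_mul_cont hqint
      ((cont_abs_rpow hl0 cu).mul (cont_abs_rpow (by linarith) cu'))
  have hmono : ∫ τ in Ioc 0 r, deriv H τ ≤ ∫ τ in Ioc 0 r,
      (θ * (q τ * (|u τ| ^ l * |u' τ| ^ (p - l))) - θ * (deltaA n p a a' τ * |u' τ| ^ p)) := by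
    refine integral_mono_ae hHint ((i2.const_mul θ).sub (i1.const_mul θ)) ?_
    filter_upwards [haAC.deriv hr, huAC.deriv hr, hvAC.deriv hr, hODE, hgrowth]
      with τ da du dv hode hg
    have dN := (hasDerivAt_norm_rpow (PhiP p (u' τ)) (one_lt_conj hp)).comp τ dv
    have dH : HasDerivAt H _ τ :=
      ((da.mul dN).const_mul (1 - 1 / p)).add ((hFd (u τ)).comp τ du)
    rw [dH.deriv]
    have e1 := PhiP_inv (x := u' τ) hp
    have e2 := PhiP_abs_rpow (x := u' τ) hp
    have e3 := PhiP_mul (x := u' τ) hp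
    have hg' := hg (u τ) (u' τ)
    simp only [Function.comp_apply, Real.norm_eq_abs, e2]
    have key : (1 - 1 / p) * (a' τ * |u' τ| ^ p + a τ * (p / (p - 1) *
        |PhiP p (u' τ)| ^ (p / (p - 1) - 2) * PhiP p (u' τ) * v' τ)) + φ (u τ) * u' τ
        = h τ (u τ) (u' τ) * u' τ - deltaA n p a a' τ * |u' τ| ^ p := by
      rw [mul_assoc (p / (p - 1)), e1]
      have e4 : (1 - 1 / p) * (p / (p - 1)) = 1 := by field_simp
      have e5 : h τ (u τ) (u' τ) = a τ * v' τ + (n - 1) * (a τ / τ) * PhiP p (u' τ) + φ (u τ) := by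
        linarith
      rw [e5]
      unfold deltaA
      rw [← e3]
      linear_combination (a τ * u' τ * v' τ) * e4
    rw [key]
    linarith
  rw [integral_sub (i2.const_mul θ) (i1.const_mul θ), integral_const_mul, integral_const_mul] at hmono
  linarith

lemma holder_bound {p l r T : ℝ} (hp : 1 < p) (hl0 : 0 < l) (hlp : l < p) (hr : 0 < r)
    (hT0 : 0 ≤ T) (hTr : T ≤ r)
    {q d u u' : ℝ → ℝ} (hqmeas : Measurable q)
    (hd : IntegrableOn d (Ioc 0 r))
    (hdpos : ∀ᵐ τ ∂(volume.restrict (Ioc 0 r)), 0 < d τ)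
    (hq0 : ∀ᵐ τ ∂(volume.restrict (Ioc 0 r)), 0 ≤ q τ)
    (huAC : ACOn u u' 0 r) (hu0 : u 0 = 0) (cu' : ContinuousOn u' (Icc 0 r))
    (huT : ∀ t ∈ Icc 0 T, u t = 0) :
    ∫⁻ t in Ioc 0 r, ENNReal.ofReal (q t * (|u t| ^ l * |u' t| ^ (p - l))) ≤
      (∫⁻ t in Ioc T r,
        ENNReal.ofReal (q t) ^ (p / l) * ENNReal.ofReal (d t) ^ (-((p - l) / l)) *
        (∫⁻ σ in Ioc 0 t, ENNReal.ofReal (d σ) ^ (-(1 / (p - 1)))) ^ (p - 1)) ^ (l / p) *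
      ∫⁻ t in Ioc 0 r, ENNReal.ofReal (d t * |u' t| ^ p) := by
  have hp0 : 0 < p := by linarith
  have hp1 : 0 < p - 1 := by linarith
  have hpl : 0 < p - l := by linarith
  set E : ℝ≥0∞ := ∫⁻ t in Ioc 0 r, ENNReal.ofReal (d t * |u' t| ^ p) with hE
  have hEtop : E ≠ ⊤ :=
    (integrableOn_mul_cont hd (cont_abs_rpow hp0 cu')).lintegral_lt_top.ne
  set V : ℝ → ℝ≥0∞ := fun t => ∫⁻ σ in Ioc 0 t, ENNReal.ofReal (d σ) ^ (-(1 / (p - 1))) with hV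
  have cu := ac_cont hr huAC
  have mu : AEMeasurable u (volume.restrict (Ioc 0 r)) :=
    (cu.mono Ioc_subset_Icc_self).aemeasurable measurableSet_Ioc
  have mu' : AEMeasurable u' (volume.restrict (Ioc 0 r)) :=
    (cu'.mono Ioc_subset_Icc_self).aemeasurable measurableSet_Ioc
  have md : AEMeasurable d (volume.restrict (Ioc 0 r)) := hd.aestronglyMeasurable.aemeasurable
  have mW : AEMeasurable (fun t => ENNReal.ofReal (d t * |u' t| ^ p)) (volume.restrict (Ioc 0 r)) := by
    fun_prop
  -- pointwise bound
  have hpt : ∀ t ∈ Ioc 0 r, ENNReal.ofReal |u t| ^ p ≤ E * V t ^ (p - 1) := by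
    intro t ht
    have hsub : Ioc 0 t ⊆ Ioc 0 r := Ioc_subset_Ioc_right ht.2
    have hle : volume.restrict (Ioc 0 t) ≤ volume.restrict (Ioc 0 r) := Measure.restrict_mono_set _ hsub
    have s1 : ENNReal.ofReal |u t| ≤ ∫⁻ σ in Ioc 0 t, ENNReal.ofReal |u' σ| := by
      have e : u t = ∫ σ in Ioc 0 t, u' σ := by
        have := huAC.2 t ⟨ht.1.le, ht.2⟩
        rw [hu0, zero_add, intervalIntegral.integral_of_le ht.1.le] at this
        exact this
      rw [e, ← Real.norm_eq_abs, ofReal_norm]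
      refine (enorm_integral_le_lintegral_enorm _).trans (le_of_eq ?_)
      congr 1 with σ
      rw [← Real.norm_eq_abs, ofReal_norm]
    have s2 : ∫⁻ σ in Ioc 0 t, ENNReal.ofReal |u' σ| ≤ ∫⁻ σ in Ioc 0 t,
        ENNReal.ofReal (d σ * |u' σ| ^ p) ^ (1 / p) *
          (ENNReal.ofReal (d σ) ^ (-(1 / (p - 1)))) ^ ((p - 1) / p) := by
      refine lintegral_mono_ae ?_
      filter_upwards [ae_mono hle hdpos] with σ hσ
      have hr1 : 0 < d σ ^ (-(1 / (p - 1))) := Real.rpow_pos_of_pos hσ _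
      have hw : 0 ≤ |u' σ| ^ p := by positivity
      rw [ENNReal.ofReal_rpow_of_pos hσ, ENNReal.ofReal_rpow_of_pos hr1,
        ENNReal.ofReal_rpow_of_nonneg (by positivity) (by positivity),
        ← ENNReal.ofReal_mul (by positivity)]
      apply le_of_eq
      congr 1
      rw [Real.mul_rpow hσ.le hw, ← Real.rpow_mul (abs_nonneg _), ← Real.rpow_mul hσ.le,
        mul_right_comm, ← Real.rpow_add hσ, mul_one_div_cancel hp0.ne', Real.rpow_one]
      rw [show 1 / p + -(1 / (p - 1)) * ((p - 1) / p) = 0 by field_simp; ring]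
      simp
    have s3 : ∫⁻ σ in Ioc 0 t, ENNReal.ofReal (d σ * |u' σ| ^ p) ^ (1 / p) *
          (ENNReal.ofReal (d σ) ^ (-(1 / (p - 1)))) ^ ((p - 1) / p) ≤
        (∫⁻ σ in Ioc 0 t, ENNReal.ofReal (d σ * |u' σ| ^ p)) ^ (1 / p) * V t ^ ((p - 1) / p) := by
      refine ENNReal.lintegral_mul_norm_pow_le (mW.mono_measure hle) ?_ (by positivity)
        (by positivity) (by field_simp; ring)
      exact ((md.mono_measure hle).ennreal_ofReal).pow_const _
    have s4 : ∫⁻ σ in Ioc 0 t, ENNReal.ofReal (d σ * |u' σ| ^ p) ≤ E := lintegral_mono_set hsub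
    have s5 : ENNReal.ofReal |u t| ≤ E ^ (1 / p) * V t ^ ((p - 1) / p) := by
      refine (s1.trans (s2.trans s3)).trans ?_
      gcongr
    calc ENNReal.ofReal |u t| ^ p ≤ (E ^ (1 / p) * V t ^ ((p - 1) / p)) ^ p := by gcongr
      _ = E * V t ^ (p - 1) := by
        rw [ENNReal.mul_rpow_of_nonneg _ _ hp0.le, ← ENNReal.rpow_mul, ← ENNReal.rpow_mul,
          one_div_mul_cancel hp0.ne', ENNReal.rpow_one, div_mul_cancel₀ _ hp0.ne']
  have hsub : Ioc T r ⊆ Ioc 0 r := Ioc_subset_Ioc_left hT0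
  have hle : volume.restrict (Ioc T r) ≤ volume.restrict (Ioc 0 r) := Measure.restrict_mono_set _ hsub
  have t1 : ∫⁻ t in Ioc 0 r, ENNReal.ofReal (q t * (|u t| ^ l * |u' t| ^ (p - l))) ≤
      ∫⁻ t in Ioc T r, ENNReal.ofReal (q t * (|u t| ^ l * |u' t| ^ (p - l))) := by
    rw [← Ioc_union_Ioc_eq_Ioc hT0 hTr]
    refine (lintegral_union_le _ _ _).trans ?_
    have : ∫⁻ t in Ioc 0 T, ENNReal.ofReal (q t * (|u t| ^ l * |u' t| ^ (p - l))) = 0 := by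
      rw [setLIntegral_congr_fun (g := fun _ => 0) measurableSet_Ioc]
      · simp
      · intro t ht
        simp only
        rw [huT t ⟨ht.1.le, ht.2⟩, abs_zero, Real.zero_rpow hl0.ne']; simp
    rw [this, zero_add]
  have t2 : ∫⁻ t in Ioc T r, ENNReal.ofReal (q t * (|u t| ^ l * |u' t| ^ (p - l))) ≤
      ∫⁻ t in Ioc T r, (ENNReal.ofReal (q t) ^ (p / l) * ENNReal.ofReal (d t) ^ (-((p - l) / l)) *
        ENNReal.ofReal |u t| ^ p) ^ (l / p) * ENNReal.ofReal (d t * |u' t| ^ p) ^ ((p - l) / p) := by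
    refine lintegral_mono_ae ?_
    filter_upwards [ae_mono hle hdpos, ae_mono hle hq0] with t ht hqt
    rw [ENNReal.ofReal_rpow_of_pos ht,
      ENNReal.ofReal_rpow_of_nonneg hqt (by positivity),
      ENNReal.ofReal_rpow_of_nonneg (abs_nonneg _) hp0.le,
      ENNReal.ofReal_rpow_of_nonneg (by positivity) (by positivity),
      ← ENNReal.ofReal_mul (by positivity), ← ENNReal.ofReal_mul (by positivity),
      ENNReal.ofReal_rpow_of_nonneg (by positivity) (by positivity),
      ← ENNReal.ofReal_mul (by positivity)]
    apply le_of_eq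
    congr 1
    have hdr : 0 ≤ d t ^ (-((p - l) / l)) := Real.rpow_nonneg ht.le _
    rw [Real.mul_rpow (by positivity) (by positivity), Real.mul_rpow (by positivity) (by positivity),
      Real.mul_rpow (by positivity) (by positivity),
      ← Real.rpow_mul hqt, ← Real.rpow_mul ht.le, ← Real.rpow_mul (abs_nonneg _),
      ← Real.rpow_mul (abs_nonneg _)]
    rw [show p / l * (l / p) = 1 by field_simp, show p * (l / p) = l by field_simp,
      show p * ((p - l) / p) = p - l by field_simp,
      show -((p - l) / l) * (l / p) = -((p - l) / p) by field_simp, Real.rpow_one]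
    have : d t ^ (-((p - l) / p)) * d t ^ ((p - l) / p) = 1 := by
      rw [← Real.rpow_add ht]; simp
    linear_combination (-(q t * |u t| ^ l * |u' t| ^ (p - l))) * this
  have t3 : ∫⁻ t in Ioc T r, (ENNReal.ofReal (q t) ^ (p / l) * ENNReal.ofReal (d t) ^ (-((p - l) / l)) *
        ENNReal.ofReal |u t| ^ p) ^ (l / p) * ENNReal.ofReal (d t * |u' t| ^ p) ^ ((p - l) / p) ≤
      (∫⁻ t in Ioc T r, ENNReal.ofReal (q t) ^ (p / l) * ENNReal.ofReal (d t) ^ (-((p - l) / l)) *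
        ENNReal.ofReal |u t| ^ p) ^ (l / p) *
      (∫⁻ t in Ioc T r, ENNReal.ofReal (d t * |u' t| ^ p)) ^ ((p - l) / p) := by
    refine ENNReal.lintegral_mul_norm_pow_le ?_ (mW.mono_measure hle) (by positivity)
        (by positivity) (by field_simp; ring)
    refine AEMeasurable.mono_measure ?_ hle
    have m1 : AEMeasurable (fun t => |u t|) (volume.restrict (Ioc 0 r)) := by fun_prop
    exact ((hqmeas.aemeasurable.ennreal_ofReal.pow_const _).mul
      (md.ennreal_ofReal.pow_const _)).mul (m1.ennreal_ofReal.pow_const _)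
  have t4 : ∫⁻ t in Ioc T r, ENNReal.ofReal (q t) ^ (p / l) * ENNReal.ofReal (d t) ^ (-((p - l) / l)) *
        ENNReal.ofReal |u t| ^ p ≤ E * ∫⁻ t in Ioc T r,
        ENNReal.ofReal (q t) ^ (p / l) * ENNReal.ofReal (d t) ^ (-((p - l) / l)) * V t ^ (p - 1) := by
    rw [← lintegral_const_mul' _ _ hEtop]
    refine setLIntegral_mono' measurableSet_Ioc fun t ht => ?_
    rw [mul_left_comm]
    exact mul_le_mul_right (hpt t (hsub ht)) _
  refine (t1.trans (t2.trans t3)).trans ?_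
  have t5 : ∫⁻ t in Ioc T r, ENNReal.ofReal (d t * |u' t| ^ p) ≤ E := lintegral_mono_set hsub
  refine (mul_le_mul' (ENNReal.rpow_le_rpow t4 (by positivity))
    (ENNReal.rpow_le_rpow t5 (by positivity))).trans (le_of_eq ?_)
  rw [ENNReal.mul_rpow_of_nonneg _ _ (by positivity), mul_comm (E ^ (l / p)), mul_assoc,
    ← ENNReal.rpow_add_of_nonneg _ _ (by positivity) (by positivity)]
  rw [show l / p + (p - l) / p = 1 by field_simp; ring, ENNReal.rpow_one]

/-- **Triviality (nondivergent form)**, Theorem 2 ii) of the paper. -/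
theorem triviality_nondivergent
    (p l n : ℝ) (R : ℝ≥0∞)
    (hp : 1 < p) (hl0 : 0 < l) (hlp : l < p) (hn : 1 ≤ n) (hR : 0 < R)
    (φ : ℝ → ℝ) (hφcont : Continuous φ) (hφodd : ∀ t : ℝ, φ (-t) = -φ t)
    (hφsign : ∀ᵐ τ ∂(volume : Measure ℝ), 0 < τ * φ τ)
    (a a' : ℝ → ℝ)
    (haAC : ∀ r : ℝ, 0 < r → ENNReal.ofReal r < R → ACOn a a' 0 r)
    (q : ℝ → ℝ) (hqmeas : Measurable q)
    (hapos : ∀ᵐ τ ∂(volume.restrict {τ : ℝ | 0 < τ ∧ ENNReal.ofReal τ < R}), 0 < a τ)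
    (hvpos : ∀ᵐ τ ∂(volume.restrict {τ : ℝ | 0 < τ ∧ ENNReal.ofReal τ < R}), 0 < deltaA n p a a' τ)
    (hvint : ∀ r : ℝ, 0 < r → ENNReal.ofReal r < R →
      IntegrableOn (deltaA n p a a') (Set.Ioc 0 r) ∧
        IntegrableOn (fun τ => deltaA n p a a' τ ^ (-(1 / (p - 1)))) (Set.Ioc 0 r))
    (hqint : ∀ r : ℝ, 0 < r → ENNReal.ofReal r < R → IntegrableOn q (Set.Ioc 0 r))
    (h : ℝ → ℝ → ℝ → ℝ)
    (hhmeas : ∀ lam₀ lam₁ : ℝ, Measurable fun τ => h τ lam₀ lam₁)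
    (hhcont : ∀ τ : ℝ, Continuous fun z : ℝ × ℝ => h τ z.1 z.2)
    (θ : ℝ) (hθ0 : 0 < θ) (hθ1 : θ ≤ 1)
    (hq0 : ∀ᵐ τ ∂(volume.restrict {τ : ℝ | 0 < τ ∧ ENNReal.ofReal τ < R}), 0 ≤ q τ)
    (hgrowth : ∀ᵐ τ ∂(volume.restrict {τ : ℝ | 0 < τ ∧ ENNReal.ofReal τ < R}),
      ∀ lam₀ lam₁ : ℝ, h τ lam₀ lam₁ * lam₁ ≤
        θ * q τ * |lam₀| ^ l * |lam₁| ^ (p - l) + (1 - θ) * deltaA n p a a' τ * |lam₁| ^ p)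
    (hK : ∀ r : ℝ, 0 < r → ENNReal.ofReal r < R →
      BDK p l q (deltaA n p a a') 0 (Set.Ioc 0 r) < ⊤)
    (u u' v' : ℝ → ℝ)
    (huAC : ∀ r : ℝ, 0 < r → ENNReal.ofReal r < R → ACOn u u' 0 r)
    (hvAC : ∀ r : ℝ, 0 < r → ENNReal.ofReal r < R →
      ACOn (fun τ => PhiP p (u' τ)) v' 0 r)
    (hu0 : u 0 = 0)
    (hODE : ∀ᵐ τ ∂(volume.restrict {τ : ℝ | 0 < τ ∧ ENNReal.ofReal τ < R}),
      a τ * v' τ + (n - 1) * (a τ / τ) * PhiP p (u' τ)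
        - h τ (u τ) (u' τ) + φ (u τ) = 0)
    (hdeg : a 0 = 0 ∨ u' 0 = 0) :
    ∀ τ : ℝ, 0 ≤ τ → ENNReal.ofReal τ < R → u τ = 0 := by
  intro r₀ hr₀ hr₀R
  rcases hr₀.eq_or_lt with rfl | hr₀pos
  · exact hu0
  have hp0 : 0 < p := by linarith
  have hI : ∫⁻ t in Ioc 0 r₀,
      ENNReal.ofReal (q t) ^ (p / l) * ENNReal.ofReal (deltaA n p a a' t) ^ (-((p - l) / l)) *
        (∫⁻ σ in Ioc 0 t, ENNReal.ofReal (deltaA n p a a' σ) ^ (-(1 / (p - 1)))) ^ (p - 1) ≠ ⊤ := by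
    intro htop
    have h1 := hK r₀ hr₀pos hr₀R
    unfold BDK at h1
    rw [htop, ENNReal.top_rpow_of_pos (by positivity), ENNReal.mul_top] at h1
    · exact lt_irrefl _ h1
    · have : 0 < (p - l) / p := div_pos (by linarith) hp0
      have := Real.rpow_pos_of_pos this ((p - l) / p)
      simpa using this
  obtain ⟨ε, hε, hsmall⟩ := exists_pos_setLIntegral_lt_of_measure_lt hI one_ne_zero
  obtain ⟨η, hη0, hηε⟩ := ENNReal.lt_iff_exists_nnreal_btwn.mp hε
  have hηpos : (0 : ℝ) < η := by exact_mod_cast hη0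
  have claim : ∀ k : ℕ, ∀ t ∈ Icc (0 : ℝ) r₀, t ≤ k * η → u t = 0 := by
    intro k
    induction k with
    | zero =>
      intro t ht hk
      have : t = 0 := le_antisymm (by simpa using hk) ht.1
      rw [this, hu0]
    | succ k ih =>
      intro r hr hk
      by_cases hkT : r ≤ k * η
      · exact ih r hr hkT
      push Not at hkT
      push_cast at hk
      have hT0 : (0 : ℝ) ≤ k * η := by positivity
      have hrpos : 0 < r := lt_of_le_of_lt hT0 hkT
      have hrR : ENNReal.ofReal r < R := (ENNReal.ofReal_le_ofReal hr.2).trans_lt hr₀R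
      have hle : volume.restrict (Ioc 0 r) ≤
          volume.restrict {τ : ℝ | 0 < τ ∧ ENNReal.ofReal τ < R} :=
        Measure.restrict_mono_set _ fun x hx =>
          ⟨hx.1, (ENNReal.ofReal_le_ofReal hx.2).trans_lt hrR⟩
      have ha := haAC r hrpos hrR
      have hu := huAC r hrpos hrR
      have hv := hvAC r hrpos hrR
      have hd := (hvint r hrpos hrR).1
      have hq := hqint r hrpos hrR
      have cu := ac_cont hrpos hu
      have cu' := uprime_cont hp hrpos hv
      have hEn := energy hp hl0 hlp hrpos hφcont ha hd hq (ae_mono hle hgrowth) hu hv hu0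
        (ae_mono hle hODE) hdeg
      have hHo := holder_bound hp hl0 hlp hrpos hT0 hkT.le hqmeas hd (ae_mono hle hvpos)
        (ae_mono hle hq0) hu hu0 cu'
        (fun t ht => ih t ⟨ht.1, ht.2.trans (hkT.le.trans hr.2)⟩ ht.2)
      have hG : ∫⁻ t in Ioc (k * (η : ℝ)) r,
          ENNReal.ofReal (q t) ^ (p / l) * ENNReal.ofReal (deltaA n p a a' t) ^ (-((p - l) / l)) *
          (∫⁻ σ in Ioc 0 t, ENNReal.ofReal (deltaA n p a a' σ) ^ (-(1 / (p - 1)))) ^ (p - 1) ≤ 1 := by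
        have h1 := hsmall (Ioc (k * (η : ℝ)) r) (by
          refine lt_of_le_of_lt (Measure.restrict_apply_le _ _) (lt_of_le_of_lt ?_ hηε)
          rw [Real.volume_Ioc, ← ENNReal.ofReal_coe_nnreal]
          exact ENNReal.ofReal_le_ofReal (by linarith))
        rw [Measure.restrict_restrict measurableSet_Ioc,
          inter_eq_left.mpr (Ioc_subset_Ioc hT0 hr.2)] at h1
        exact h1.le
      have hc : ∫⁻ t in Ioc 0 r, ENNReal.ofReal (q t * (|u t| ^ l * |u' t| ^ (p - l))) ≤
          ∫⁻ t in Ioc 0 r, ENNReal.ofReal (deltaA n p a a' t * |u' t| ^ p) := by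
        refine hHo.trans ?_
        conv_rhs => rw [← one_mul (∫⁻ t in Ioc 0 r, ENNReal.ofReal (deltaA n p a a' t * |u' t| ^ p))]
        exact mul_le_mul' (ENNReal.rpow_le_one hG (by positivity)) le_rfl
      have i1 : IntegrableOn (fun τ => deltaA n p a a' τ * |u' τ| ^ p) (Ioc 0 r) :=
        integrableOn_mul_cont hd (cont_abs_rpow (by linarith) cu')
      have i2 : IntegrableOn (fun τ => q τ * (|u τ| ^ l * |u' τ| ^ (p - l))) (Ioc 0 r) :=
        integrableOn_mul_cont hq
          ((cont_abs_rpow hl0 cu).mul (cont_abs_rpow (by linarith) cu'))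
      have n1 : 0 ≤ᵐ[volume.restrict (Ioc 0 r)] fun τ => deltaA n p a a' τ * |u' τ| ^ p := by
        filter_upwards [ae_mono hle hvpos] with t ht
        exact mul_nonneg ht.le (by positivity)
      have n2 : 0 ≤ᵐ[volume.restrict (Ioc 0 r)]
          fun τ => q τ * (|u τ| ^ l * |u' τ| ^ (p - l)) := by
        filter_upwards [ae_mono hle hq0] with t ht
        exact mul_nonneg ht (by positivity)
      rw [← ofReal_integral_eq_lintegral_ofReal i1 n1,
        ← ofReal_integral_eq_lintegral_ofReal i2 n2,
        ENNReal.ofReal_le_ofReal_iff (integral_nonneg_of_ae n1)] at hc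
      have han := nonneg_of_ae_pos hrpos (ac_cont hrpos ha) (ae_mono hle hapos)
      have h1p : 0 ≤ 1 - 1 / p := by
        rw [sub_nonneg, div_le_one hp0]; exact hp.le
      have hkin : 0 ≤ (1 - 1 / p) * (a r * |u' r| ^ p) := by positivity
      have hth := mul_le_mul_of_nonneg_left hc hθ0.le
      by_contra hne
      have := F_pos hφcont hφsign hne
      linarith
  obtain ⟨k, hk⟩ := exists_nat_ge (r₀ / η)
  refine claim k r₀ ⟨hr₀, le_rfl⟩ ?_
  rwa [div_le_iff₀ hηpos] at hk
end

section
/- (A priori bound, divergent form) Let p ∈ (1,∞), l ∈ (0,p), n ∈ [1,∞) real, R ∈ (0,∞]. Let φ : ℝ → ℝ be continuous and odd with τφ(τ) > 0 for a.e. τ, and set Φ(t) := ∫_0^t φ(s) ds. Let a be locally absolutely continuous on [0,R) with a > 0 a.e., let d_a(τ) := (n−1)a(τ)/τ + (1/p)a'(τ) satisfy d_a > 0 a.e. with d_a and d_a^{−1/(p−1)} locally integrable on [0,R). Let h : (0,R) × ℝ² → ℝ be a Carathéodory function such that for some θ ∈ (0,1] and a non-negative measurable q locally integrable on [0,R): h(τ,λ₀,λ₁)λ₁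 ≤ θ q(τ)|λ₀|^l |λ₁|^{p−l} + (1−θ) d_a(τ)|λ₁|^p for all λ₀, λ₁ ∈ ℝ and a.e. τ. Assume K(0,R,q,d_a) ≤ 1. Let u be locally absolutely continuous on (0,R) with Φ_p(u') locally absolutely continuous on [0,R), u(0) = 0, and suppose u solves the divergent ODE: (a(τ)Φ_p(u'(τ)))' + (n−1)(a(τ)/τ)Φ_p(u'(τ)) − h(τ,u(τ),u'(τ)) + φ(u(τ)) = 0 for a.e. τ ∈ (0,R). Then for every r ∈ (0,R): Φ(|u(r)|) ≤ (1 − 1/p) a(0) |u'(0)|^p. -/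
open MeasureTheory Set Filter
open scoped ENNReal

lemma aux_ac_congr {f g : ℝ → ℝ} {a b : ℝ} (hf : AbsolutelyContinuousOnInterval f a b)
    (h : ∀ x ∈ uIcc a b, g x = f x) : AbsolutelyContinuousOnInterval g a b := by
  rw [absolutelyContinuousOnInterval_iff] at hf ⊢
  intro ε hε
  obtain ⟨δ, hδ, H⟩ := hf ε hε
  refine ⟨δ, hδ, fun E hE hs => ?_⟩
  have := H E hE hs
  convert this using 1
  refine Finset.sum_congr rfl fun i hi => ?_
  rw [h _ (hE.1 i hi).1, h _ (hE.1 i hi).2]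

lemma aux_ac_lip {f g : ℝ → ℝ} {a b : ℝ} {C : ℝ} (hC : 0 ≤ C)
    (hf : AbsolutelyContinuousOnInterval f a b)
    (h : ∀ x ∈ uIcc a b, ∀ y ∈ uIcc a b, dist (g x) (g y) ≤ C * dist (f x) (f y)) :
    AbsolutelyContinuousOnInterval g a b := by
  rw [absolutelyContinuousOnInterval_iff] at hf ⊢
  intro ε hε
  obtain ⟨δ, hδ, H⟩ := hf (ε / (C + 1)) (by positivity)
  refine ⟨δ, hδ, fun E hE hs => ?_⟩
  have h1 := H E hE hs
  calc _ ≤ ∑ i ∈ Finset.range E.1, C * dist (f (E.2 i).1) (f (E.2 i).2) :=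
        Finset.sum_le_sum fun i hi => h _ (hE.1 i hi).1 _ (hE.1 i hi).2
    _ = C * ∑ i ∈ Finset.range E.1, dist (f (E.2 i).1) (f (E.2 i).2) := by rw [Finset.mul_sum]
    _ ≤ C * (ε / (C + 1)) := by gcongr
    _ < ε := by
      rw [mul_div_assoc', div_lt_iff₀ (by positivity)]
      nlinarith

lemma aux_ac_comp {f G : ℝ → ℝ} {a b : ℝ} (hG : ContDiff ℝ 1 G)
    (hf : AbsolutelyContinuousOnInterval f a b) :
    AbsolutelyContinuousOnInterval (fun x => G (f x)) a b := by
  obtain ⟨C, hC⟩ := hf.exists_bound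
  obtain ⟨K, hK⟩ := (hG.contDiffOn (s := Icc (-C) C)).exists_lipschitzOnWith (by decide)
    (convex_Icc _ _) isCompact_Icc
  refine aux_ac_lip K.2 hf fun x hx y hy => ?_
  exact hK.dist_le_mul _ (abs_le.1 (hC x hx)) _ (abs_le.1 (hC y hy))

lemma aux_ACOn_ac {f f' : ℝ → ℝ} {r : ℝ} (hr : 0 < r) (h : ACOn f f' 0 r) :
    AbsolutelyContinuousOnInterval f 0 r ∧
      ∀ᵐ x, x ∈ Ioo 0 r → HasDerivAt f (f' x) x := by
  have hi : IntervalIntegrable f' volume 0 r :=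
    (intervalIntegrable_iff_integrableOn_Icc_of_le hr.le).2 h.1
  constructor
  · have h1 := hi.absolutelyContinuousOnInterval_intervalIntegral
      (c := 0) (by simp)
    have h2 : AbsolutelyContinuousOnInterval (fun x => f 0 + ∫ v in (0:ℝ)..x, f' v) 0 r :=
      aux_ac_lip (C := 1) zero_le_one h1 (by intro x _ y _; simp)
    refine aux_ac_congr h2 fun x hx => ?_
    rw [uIcc_of_le hr.le] at hx
    exact h.2 x hx
  · filter_upwards [hi.ae_hasDerivAt_integral] with x hx hxI
    have h1 := (hx (by rw [uIcc_of_le hr.le]; exact Ioo_subset_Icc_self hxI) 0 (by simp)).const_add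
      (f 0)
    refine h1.congr_of_eventuallyEq ?_
    filter_upwards [Icc_mem_nhds hxI.1 hxI.2] with y hy
    exact h.2 y hy

lemma aux_ftc {F F' : ℝ → ℝ} {r : ℝ} (hr : 0 < r) (hF : AbsolutelyContinuousOnInterval F 0 r)
    (hd : ∀ᵐ x, x ∈ Ioo 0 r → HasDerivAt F (F' x) x) :
    IntegrableOn F' (Ioc 0 r) ∧ ∫ x in Ioc 0 r, F' x = F r - F 0 := by
  have h1 := hF.intervalIntegrable_deriv
  have h2 := hF.integral_deriv_eq_sub
  have hne : ∀ᵐ x : ℝ, x ≠ r := by simp [ae_iff]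
  have h3 : ∀ᵐ x ∂(volume.restrict (Ioc 0 r)), deriv F x = F' x := by
    rw [ae_restrict_iff' measurableSet_Ioc]
    filter_upwards [hd, hne] with x hx hn hxI
    exact (hx ⟨hxI.1, lt_of_le_of_ne hxI.2 hn⟩).deriv
  rw [intervalIntegrable_iff_integrableOn_Ioc_of_le hr.le] at h1
  rw [intervalIntegral.integral_of_le hr.le] at h2
  exact ⟨h1.congr h3, by rw [← h2]; exact (integral_congr_ae h3).symm⟩

lemma aux_pow {m : ℝ → ℝ} {r α : ℝ} (hr : 0 < r) (hα : 0 < α) (hm : IntegrableOn m (Ioc 0 r))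
    (hm0 : ∀ᵐ x ∂(volume.restrict (Ioc 0 r)), 0 ≤ m x) :
    ∫⁻ t in Ioc 0 r, (∫⁻ s in Ioc 0 t, ENNReal.ofReal (m s)) ^ α * ENNReal.ofReal (m t)
      = ENNReal.ofReal (1 / (α + 1)) * (∫⁻ s in Ioc 0 r, ENNReal.ofReal (m s)) ^ (α + 1) := by
  have hac : ACOn (fun x => ∫ s in (0:ℝ)..x, m s) m 0 r :=
    ⟨(integrableOn_Icc_iff_integrableOn_Ioc (by simp)).2 hm, fun x _ => by simp⟩
  obtain ⟨h1, h2⟩ := aux_ACOn_ac hr hac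
  have hz : ∀ t ∈ Icc 0 r, 0 ≤ ∫ s in (0:ℝ)..t, m s ∧
      ∫⁻ s in Ioc 0 t, ENNReal.ofReal (m s) = ENNReal.ofReal (∫ s in (0:ℝ)..t, m s) := by
    intro t ht
    have hs : Ioc 0 t ⊆ Ioc 0 r := Ioc_subset_Ioc_right ht.2
    have h0 : ∀ᵐ x ∂(volume.restrict (Ioc 0 t)), 0 ≤ m x := ae_restrict_of_ae_restrict_of_subset hs hm0
    rw [intervalIntegral.integral_of_le ht.1]
    exact ⟨integral_nonneg_of_ae h0, (ofReal_integral_eq_lintegral_ofReal (hm.mono_set hs) h0).symm⟩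
  have hG : ContDiff ℝ 1 (fun y : ℝ => ‖y‖ ^ (α + 1)) := contDiff_norm_rpow (by linarith)
  have h3 := aux_ac_comp hG h1
  set z : ℝ → ℝ := fun x => ∫ s in (0:ℝ)..x, m s with hzdef
  obtain ⟨h4, h5⟩ := aux_ftc (F' := fun t => (α + 1) * |z t| ^ (α + 1 - 2) * z t * m t) hr h3 (by
    filter_upwards [h2] with x hx hxI
    exact (hasDerivAt_norm_rpow (z x) (by linarith)).comp x (hx hxI))
  have hpt : ∀ t ∈ Icc 0 r, (α + 1) * |z t| ^ (α + 1 - 2) * z t * m t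
      = (α + 1) * (z t ^ α * m t) := by
    intro t ht
    have h0 := (hz t ht).1
    rw [abs_of_nonneg h0]
    rcases h0.eq_or_lt with h | h
    · have : z t = 0 := h.symm
      simp [this, Real.zero_rpow hα.ne']
    · have : z t ^ α = z t ^ (α + 1 - 2) * z t := by
        rw [← Real.rpow_add_one (ne_of_gt h)]; congr 1; ring
      rw [this]; ring
  have hR := hz r ⟨hr.le, le_rfl⟩
  have e1 : ∫⁻ t in Ioc 0 r, (∫⁻ s in Ioc 0 t, ENNReal.ofReal (m s)) ^ α * ENNReal.ofReal (m t)
      = ∫⁻ t in Ioc 0 r, ENNReal.ofReal (1 / (α + 1)) *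
        ENNReal.ofReal ((α + 1) * |z t| ^ (α + 1 - 2) * z t * m t) := by
    refine setLIntegral_congr_fun measurableSet_Ioc fun t ht => ?_
    have ht' := Ioc_subset_Icc_self ht
    have := hz t ht'
    rw [this.2, hpt t ht', ENNReal.ofReal_rpow_of_nonneg this.1 hα.le,
      ← ENNReal.ofReal_mul (Real.rpow_nonneg this.1 _), ← ENNReal.ofReal_mul (by positivity)]
    congr 1
    have : α + 1 ≠ 0 := by positivity
    field_simp
    exact mul_comm _ _
  rw [e1, lintegral_const_mul' _ _ ENNReal.ofReal_ne_top, hR.2,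
    ← ofReal_integral_eq_lintegral_ofReal h4, h5]
  · rw [ENNReal.ofReal_rpow_of_nonneg hR.1 (by positivity)]
    simp only [intervalIntegral.integral_same, norm_zero,
      Real.zero_rpow (show α + 1 ≠ 0 by positivity), sub_zero, Real.norm_of_nonneg hR.1]
  · rw [EventuallyLE, ae_restrict_iff' measurableSet_Ioc]
    rw [ae_restrict_iff' measurableSet_Ioc] at hm0
    filter_upwards [hm0] with t ht htI
    rw [hpt t (Ioc_subset_Icc_self htI)]
    have := (hz t (Ioc_subset_Icc_self htI)).1
    have := ht htI
    simp only [Pi.zero_apply]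
    have := Real.rpow_nonneg (hz t (Ioc_subset_Icc_self htI)).1 α
    positivity

lemma aux_bd {p l r : ℝ} (hp : 1 < p) (hl0 : 0 < l) (hlp : l < p) (hr : 0 < r)
    {Q V U D : ℝ → ℝ≥0∞} {m : ℝ → ℝ}
    (hQ : AEMeasurable Q (volume.restrict (Ioc 0 r)))
    (hV : AEMeasurable V (volume.restrict (Ioc 0 r)))
    (hD : AEMeasurable D (volume.restrict (Ioc 0 r)))
    (hVp : ∀ᵐ t ∂(volume.restrict (Ioc 0 r)), V t ≠ 0 ∧ V t ≠ ⊤)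
    (hU : ∀ t ∈ Ioc 0 r, U t ≤ ∫⁻ s in Ioc 0 t, D s)
    (hm : IntegrableOn m (Ioc 0 r)) (hm0 : ∀ᵐ x ∂(volume.restrict (Ioc 0 r)), 0 ≤ m x)
    (hmV : ∀ᵐ t ∂(volume.restrict (Ioc 0 r)), ENNReal.ofReal (m t) = V t * D t ^ p) :
    ∫⁻ t in Ioc 0 r, Q t * U t ^ l * D t ^ (p - l) ≤
      ENNReal.ofReal (((p - l) / p) ^ ((p - l) / p)) *
    (∫⁻ t in Ioc 0 r, Q t ^ (p / l) * V t ^ (-((p - l) / l)) *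
        (∫⁻ σ in Ioc 0 t, V σ ^ (-(1 / (p - 1)))) ^ (p - 1)) ^ (l / p) *
      ∫⁻ t in Ioc 0 r, ENNReal.ofReal (m t) := by
  have hp0 : 0 < p := by linarith
  have hpl : 0 < p - l := by linarith
  have hp1 : 0 < p - 1 := by linarith
  set W : ℝ → ℝ≥0∞ := fun t => ∫⁻ σ in Ioc 0 t, V σ ^ (-(1 / (p - 1))) with hW
  set Z : ℝ → ℝ≥0∞ := fun t => ∫⁻ σ in Ioc 0 t, ENNReal.ofReal (m σ) with hZ
  have hWm : Measurable W := by
    refine Monotone.measurable fun s t hst => ?_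
    exact lintegral_mono_set (Ioc_subset_Ioc_right hst)
  have hZm : Measurable Z := by
    refine Monotone.measurable fun s t hst => ?_
    exact lintegral_mono_set (Ioc_subset_Ioc_right hst)
  -- Hoelder on the inner integral
  have hUb : ∀ t ∈ Ioc 0 r, U t ≤ W t ^ ((p - 1) / p) * Z t ^ (1 / p) := by
    intro t ht
    have hs : Ioc 0 t ⊆ Ioc 0 r := Ioc_subset_Ioc_right ht.2
    have hle := Measure.restrict_mono (μ := (volume : Measure ℝ)) hs le_rfl
    have hc : (p / (p - 1)).HolderConjugate p :=
      (Real.HolderConjugate.conjExponent hp).symm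
    have hh := ENNReal.lintegral_mul_le_Lp_mul_Lq (volume.restrict (Ioc 0 t)) hc
      (f := fun s => V s ^ (-(1 / p))) (g := fun s => V s ^ (1 / p) * D s)
      ((hV.mono_measure hle).pow_const _) (((hV.mono_measure hle).pow_const _).mul (hD.mono_measure hle))
    refine (hU t ht).trans (le_trans (le_of_eq ?_) (hh.trans (le_of_eq ?_)))
    · refine lintegral_congr_ae ?_
      filter_upwards [ae_restrict_of_ae_restrict_of_subset hs hVp] with s hs
      simp only [Pi.mul_apply]
      rw [← mul_assoc, ← ENNReal.rpow_add _ _ hs.1 hs.2]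
      simp
    · have e1 : ∫⁻ s in Ioc 0 t, (V s ^ (-(1 / p))) ^ (p / (p - 1)) = W t := by
        refine lintegral_congr fun s => ?_
        rw [← ENNReal.rpow_mul]
        congr 1; field_simp
      have e2 : ∫⁻ s in Ioc 0 t, (V s ^ (1 / p) * D s) ^ p = Z t := by
        refine lintegral_congr_ae ?_
        filter_upwards [ae_restrict_of_ae_restrict_of_subset hs hmV] with s hs
        rw [hs, ENNReal.mul_rpow_of_nonneg _ _ hp0.le, ← ENNReal.rpow_mul]
        simp [hp0.ne']
      rw [e1, e2]
      simp
  have hc : (p / l).HolderConjugate (p / (p - l)) := by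
    rw [Real.holderConjugate_iff]
    constructor
    · rw [lt_div_iff₀ hl0]; linarith
    · field_simp; ring
  have hh := ENNReal.lintegral_mul_le_Lp_mul_Lq (volume.restrict (Ioc 0 r)) hc
    (f := fun t => Q t * V t ^ (-((p - l) / p)) * W t ^ ((p - 1) * l / p))
    (g := fun t => Z t ^ (l / p) * (V t * D t ^ p) ^ ((p - l) / p))
    ((hQ.mul (hV.pow_const _)).mul (hWm.aemeasurable.pow_const _))
    ((hZm.aemeasurable.pow_const _).mul ((hV.mul (hD.pow_const _)).pow_const _))
  have hone : ∫⁻ t in Ioc 0 r, Q t * U t ^ l * D t ^ (p - l) ≤ ∫⁻ t in Ioc 0 r,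
      ((fun t => Q t * V t ^ (-((p - l) / p)) * W t ^ ((p - 1) * l / p)) *
       (fun t => Z t ^ (l / p) * (V t * D t ^ p) ^ ((p - l) / p))) t := by
    refine lintegral_mono_ae ?_
    filter_upwards [hVp, ae_restrict_mem measurableSet_Ioc] with t ht htI
    simp only [Pi.mul_apply]
    calc Q t * U t ^ l * D t ^ (p - l)
        ≤ Q t * (W t ^ ((p - 1) / p) * Z t ^ (1 / p)) ^ l * D t ^ (p - l) := by
          gcongr; exact hUb t htI
      _ = Q t * (V t ^ (-((p - l) / p)) * V t ^ ((p - l) / p)) *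
            (W t ^ ((p - 1) / p) * Z t ^ (1 / p)) ^ l * D t ^ (p - l) := by
          rw [← ENNReal.rpow_add _ _ ht.1 ht.2]; simp
      _ = _ := by
          rw [ENNReal.mul_rpow_of_nonneg _ _ hl0.le, ENNReal.mul_rpow_of_nonneg _ _ (by positivity),
            ← ENNReal.rpow_mul, ← ENNReal.rpow_mul, ← ENNReal.rpow_mul]
          have e1 : p * ((p - l) / p) = p - l := by field_simp
          have e2 : (p - 1) / p * l = (p - 1) * l / p := by ring
          have e3 : 1 / p * l = l / p := by ring
          rw [e1, e2, e3]; ring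
  refine hone.trans (hh.trans (le_of_eq ?_))
  have e1 : ∫⁻ t in Ioc 0 r, (Q t * V t ^ (-((p - l) / p)) * W t ^ ((p - 1) * l / p)) ^ (p / l)
      = ∫⁻ t in Ioc 0 r, Q t ^ (p / l) * V t ^ (-((p - l) / l)) * W t ^ (p - 1) := by
    refine lintegral_congr fun t => ?_
    have hpl' : 0 ≤ p / l := by positivity
    rw [ENNReal.mul_rpow_of_nonneg _ _ hpl', ENNReal.mul_rpow_of_nonneg _ _ hpl',
      ← ENNReal.rpow_mul, ← ENNReal.rpow_mul]
    congr 2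
    · congr 1; field_simp
    · field_simp
  have e2 : ∫⁻ t in Ioc 0 r, (Z t ^ (l / p) * (V t * D t ^ p) ^ ((p - l) / p)) ^ (p / (p - l))
      = ENNReal.ofReal (1 / (l / (p - l) + 1)) * Z r ^ (l / (p - l) + 1) := by
    rw [← aux_pow hr (by positivity) hm hm0]
    refine lintegral_congr_ae ?_
    filter_upwards [hmV] with t ht
    rw [ENNReal.mul_rpow_of_nonneg _ _ (by positivity), ← ENNReal.rpow_mul, ← ENNReal.rpow_mul, ht]
    have h1 : l / p * (p / (p - l)) = l / (p - l) := by field_simp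
    have h2 : (p - l) / p * (p / (p - l)) = 1 := by field_simp
    rw [h1, h2, ENNReal.rpow_one]
  rw [e1, e2]
  have h1 : 1 / (l / (p - l) + 1) = (p - l) / p := by field_simp; ring
  have h2 : 1 / (p / l) = l / p := by field_simp
  have h3 : 1 / (p / (p - l)) = (p - l) / p := by field_simp
  have h4 : (l / (p - l) + 1) * ((p - l) / p) = 1 := by field_simp; ring
  rw [h1, h2, h3, ENNReal.mul_rpow_of_nonneg _ _ (by positivity), ← ENNReal.rpow_mul, h4,
    ENNReal.rpow_one, ENNReal.ofReal_rpow_of_nonneg (by positivity) (by positivity)]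
  ring

lemma aux_Phi_mul {p : ℝ} (hp : 1 < p) (x : ℝ) : PhiP p x * x = |x| ^ p := by
  unfold PhiP
  split_ifs with h
  · subst h; simp [Real.zero_rpow (show p ≠ 0 by linarith)]
  · have h0 : 0 < |x| := abs_pos.2 h
    have e : |x| ^ p = |x| ^ (p - 2) * |x| ^ (2:ℝ) := by
      rw [← Real.rpow_add h0]; congr 1; ring
    rw [e, Real.rpow_two, sq_abs]; ring

lemma aux_Phi_abs {p : ℝ} (hp : 1 < p) (x : ℝ) : |PhiP p x| = |x| ^ (p - 1) := by
  unfold PhiP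
  split_ifs with h
  · subst h; simp [Real.zero_rpow (show p - 1 ≠ 0 by linarith)]
  · have h0 : 0 < |x| := abs_pos.2 h
    rw [abs_mul, abs_of_nonneg (Real.rpow_nonneg h0.le _), ← Real.rpow_add_one h0.ne']
    congr 1; ring

lemma aux_Phi_pow {p : ℝ} (hp : 1 < p) (x : ℝ) : |PhiP p x| ^ (p / (p - 1)) = |x| ^ p := by
  have : p - 1 ≠ 0 := by linarith
  rw [aux_Phi_abs hp, ← Real.rpow_mul (abs_nonneg _)]
  congr 1; field_simp

lemma aux_Phi_inv {p : ℝ} (hp : 1 < p) (x : ℝ) :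
    |PhiP p x| ^ (p / (p - 1) - 2) * PhiP p x = x := by
  have hp1 : p - 1 ≠ 0 := by linarith
  rw [aux_Phi_abs hp, ← Real.rpow_mul (abs_nonneg _)]
  unfold PhiP
  split_ifs with h
  · simp [h]
  · have h0 : 0 < |x| := abs_pos.2 h
    rw [← mul_assoc, ← Real.rpow_add h0]
    have : (p - 1) * (p / (p - 1) - 2) + (p - 2) = 0 := by field_simp; ring
    rw [this]; simp

lemma aux_psi_cont {s : ℝ} (hs : 1 < s) : Continuous fun y : ℝ => |y| ^ (s - 2) * y := by
  have h1 : ContDiff ℝ 1 (fun x : ℝ => ‖x‖ ^ s) := contDiff_norm_rpow hs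
  have h2 : Continuous (deriv fun x : ℝ => ‖x‖ ^ s) := h1.continuous_deriv (by norm_num)
  have h3 : (fun y : ℝ => |y| ^ (s - 2) * y) = fun y => s⁻¹ * deriv (fun x : ℝ => ‖x‖ ^ s) y := by
    funext y
    rw [(hasDerivAt_norm_rpow y hs).deriv, Real.norm_eq_abs]
    have : s ≠ 0 := by linarith
    field_simp
  rw [h3]
  exact continuous_const.mul h2

/-- **A priori bound (divergent form)**, Theorem 2 i) of the paper. -/
theorem apriori_bound_divergent
    (p l n : ℝ) (R : ℝ≥0∞)
    (hp : 1 < p) (hl0 : 0 < l) (hlp : l < p) (hn : 1 ≤ n) (hR : 0 < R)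
    (φ : ℝ → ℝ) (hφcont : Continuous φ) (hφodd : ∀ t : ℝ, φ (-t) = -φ t)
    (hφsign : ∀ᵐ τ ∂(volume : Measure ℝ), 0 < τ * φ τ)
    (a a' : ℝ → ℝ)
    (haAC : ∀ r : ℝ, 0 < r → ENNReal.ofReal r < R → ACOn a a' 0 r)
    (q : ℝ → ℝ) (hqmeas : Measurable q)
    (hapos : ∀ᵐ τ ∂(volume.restrict {τ : ℝ | 0 < τ ∧ ENNReal.ofReal τ < R}), 0 < a τ)
    (hvpos : ∀ᵐ τ ∂(volume.restrict {τ : ℝ | 0 < τ ∧ ENNReal.ofReal τ < R}), 0 < dA n p a a' τ)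
    (hvint : ∀ r : ℝ, 0 < r → ENNReal.ofReal r < R →
      IntegrableOn (dA n p a a') (Set.Ioc 0 r) ∧
        IntegrableOn (fun τ => dA n p a a' τ ^ (-(1 / (p - 1)))) (Set.Ioc 0 r))
    (hqint : ∀ r : ℝ, 0 < r → ENNReal.ofReal r < R → IntegrableOn q (Set.Ioc 0 r))
    (h : ℝ → ℝ → ℝ → ℝ)
    (hhmeas : ∀ lam₀ lam₁ : ℝ, Measurable fun τ => h τ lam₀ lam₁)
    (hhcont : ∀ τ : ℝ, Continuous fun z : ℝ × ℝ => h τ z.1 z.2)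
    (θ : ℝ) (hθ0 : 0 < θ) (hθ1 : θ ≤ 1)
    (hq0 : ∀ᵐ τ ∂(volume.restrict {τ : ℝ | 0 < τ ∧ ENNReal.ofReal τ < R}), 0 ≤ q τ)
    (hgrowth : ∀ᵐ τ ∂(volume.restrict {τ : ℝ | 0 < τ ∧ ENNReal.ofReal τ < R}),
      ∀ lam₀ lam₁ : ℝ, h τ lam₀ lam₁ * lam₁ ≤
        θ * q τ * |lam₀| ^ l * |lam₁| ^ (p - l) + (1 - θ) * dA n p a a' τ * |lam₁| ^ p)
    (hK : BDK p l q (dA n p a a') 0 {τ : ℝ | 0 < τ ∧ ENNReal.ofReal τ < R} ≤ 1)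
    (u u' v' w' : ℝ → ℝ)
    (huAC : ∀ r : ℝ, 0 < r → ENNReal.ofReal r < R → ACOn u u' 0 r)
    (hvAC : ∀ r : ℝ, 0 < r → ENNReal.ofReal r < R →
      ACOn (fun τ => PhiP p (u' τ)) v' 0 r)
    (hwAC : ∀ r : ℝ, 0 < r → ENNReal.ofReal r < R →
      ACOn (fun τ => a τ * PhiP p (u' τ)) w' 0 r)
    (hu0 : u 0 = 0)
    (hODE : ∀ᵐ τ ∂(volume.restrict {τ : ℝ | 0 < τ ∧ ENNReal.ofReal τ < R}),
      w' τ + (n - 1) * (a τ / τ) * PhiP p (u' τ)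
        - h τ (u τ) (u' τ) + φ (u τ) = 0) :
    ∀ r : ℝ, 0 < r → ENNReal.ofReal r < R →
      (∫ σ in (0:ℝ)..(|u r|), φ σ) ≤ (1 - 1 / p) * a 0 * |u' 0| ^ p := by
  intro r hr hrR
  have hp0 : 0 < p := by linarith
  have hp1 : 0 < p - 1 := by linarith
  have hpl : 0 < p - l := by linarith
  set P : ℝ := p / (p - 1) with hP
  have hP1 : 1 < P := by rw [hP, lt_div_iff₀ hp1]; linarith
  have hsub : Ioc 0 r ⊆ {τ : ℝ | 0 < τ ∧ ENNReal.ofReal τ < R} := fun t ht =>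
    ⟨ht.1, (ENNReal.ofReal_le_ofReal ht.2).trans_lt hrR⟩
  replace hapos := ae_restrict_of_ae_restrict_of_subset hsub hapos
  replace hvpos := ae_restrict_of_ae_restrict_of_subset hsub hvpos
  replace hq0 := ae_restrict_of_ae_restrict_of_subset hsub hq0
  replace hgrowth := ae_restrict_of_ae_restrict_of_subset hsub hgrowth
  replace hODE := ae_restrict_of_ae_restrict_of_subset hsub hODE
  obtain ⟨hvi, -⟩ := hvint r hr hrR
  have hqi := hqint r hr hrR
  obtain ⟨haC, had⟩ := aux_ACOn_ac hr (haAC r hr hrR)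
  obtain ⟨huC, hud⟩ := aux_ACOn_ac hr (huAC r hr hrR)
  obtain ⟨hvC, hvd⟩ := aux_ACOn_ac hr (hvAC r hr hrR)
  obtain ⟨-, hwd⟩ := aux_ACOn_ac hr (hwAC r hr hrR)
  have hac := haC.continuousOn
  have huc := huC.continuousOn
  have hvc := hvC.continuousOn
  rw [uIcc_of_le hr.le] at hac huc hvc
  -- continuity of the derivative
  have hu'c : ContinuousOn u' (Icc 0 r) := by
    refine ((aux_psi_cont hP1).comp_continuousOn hvc).congr fun t _ => ?_
    exact (aux_Phi_inv hp (u' t)).symm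
  -- a is nonnegative at r
  have har : 0 ≤ a r := by
    by_contra hneg
    push Not at hneg
    have hcw : ContinuousWithinAt a (Iic r) r :=
      (hac r ⟨hr.le, le_rfl⟩).mono_of_mem_nhdsWithin (Icc_mem_nhdsLE hr)
    have hev : ∀ᶠ t in nhdsWithin r (Iic r), a t < 0 := hcw.eventually (gt_mem_nhds hneg)
    obtain ⟨c, hc, hcs⟩ := (mem_nhdsLE_iff_exists_Ioc_subset' hr).1
      (hev : {t | a t < 0} ∈ nhdsWithin r (Iic r))
    have hms : Ioc (max c 0) r ⊆ Ioc 0 r := Ioc_subset_Ioc_left (le_max_right _ _)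
    have hb := ae_restrict_of_ae_restrict_of_subset hms hapos
    have hlt : max c 0 < r := max_lt hc hr
    have hF : ∀ᵐ t ∂(volume.restrict (Ioc (max c 0) r)), False := by
      filter_upwards [hb, ae_restrict_mem measurableSet_Ioc] with t h1 h2
      have h3 : a t < 0 := hcs ⟨(le_max_left c 0).trans_lt h2.1, h2.2⟩
      linarith
    rw [ae_restrict_iff' measurableSet_Ioc] at hF
    have h0 : volume (Ioc (max c 0) r) = 0 := by
      rw [ae_iff] at hF
      convert hF using 2
      ext t; simp [and_assoc]
    rw [Real.volume_Ioc, ENNReal.ofReal_eq_zero] at h0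
    linarith
  -- the energy
  set G : ℝ → ℝ := fun x => ∫ σ in (0:ℝ)..x, φ σ with hGdef
  have hGd : ∀ x, HasDerivAt G (φ x) x := fun x => hφcont.integral_hasStrictDerivAt 0 x |>.hasDerivAt
  have hGC : ContDiff ℝ 1 G := by
    rw [contDiff_one_iff_deriv]
    refine ⟨fun x => (hGd x).differentiableAt, ?_⟩
    rw [show deriv G = φ from funext fun x => (hGd x).deriv]
    exact hφcont
  have hNC : ContDiff ℝ 1 (fun y : ℝ => ‖y‖ ^ P) := contDiff_norm_rpow hP1
  have hEC := ((haC.mul (aux_ac_comp hNC hvC)).const_mul (1 - 1 / p)).add (aux_ac_comp hGC huC)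
  obtain ⟨hEi, hEint⟩ := aux_ftc (F' := fun t => (1 - 1 / p) *
      (a' t * ‖PhiP p (u' t)‖ ^ P + a t * (P * ‖PhiP p (u' t)‖ ^ (P - 2) * PhiP p (u' t) * v' t))
      + φ (u t) * u' t) hr hEC (by
    filter_upwards [had, hud, hvd] with t h1 h2 h3 ht
    have k3 := (hasDerivAt_norm_rpow (PhiP p (u' t)) hP1).comp t (h3 ht)
    exact (((h1 ht).mul k3).const_mul (1 - 1 / p)).add ((hGd (u t)).comp t (h2 ht)))
  -- the two integrands
  set B : ℝ → ℝ := fun t => q t * (|u t| ^ l * |u' t| ^ (p - l)) with hB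
  set M : ℝ → ℝ := fun t => dA n p a a' t * |u' t| ^ p with hM
  have hcl : ContinuousOn (fun t => |u t| ^ l * |u' t| ^ (p - l)) (Icc 0 r) :=
    (huc.abs.rpow_const fun _ _ => Or.inr hl0.le).mul
      (hu'c.abs.rpow_const fun _ _ => Or.inr hpl.le)
  have hcp : ContinuousOn (fun t => |u' t| ^ p) (Icc 0 r) :=
    hu'c.abs.rpow_const fun _ _ => Or.inr hp0.le
  have hBi : IntegrableOn B (Ioc 0 r) :=
    (((integrableOn_Icc_iff_integrableOn_Ioc (by simp)).2 hqi).mul_continuousOn hcl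
      isCompact_Icc).mono_set Ioc_subset_Icc_self
  have hMi : IntegrableOn M (Ioc 0 r) :=
    (((integrableOn_Icc_iff_integrableOn_Ioc (by simp)).2 hvi).mul_continuousOn hcp
      isCompact_Icc).mono_set Ioc_subset_Icc_self
  have hB0 : ∀ᵐ t ∂(volume.restrict (Ioc 0 r)), 0 ≤ B t := by
    filter_upwards [hq0] with t ht
    simp only [hB]; positivity
  have hM0 : ∀ᵐ t ∂(volume.restrict (Ioc 0 r)), 0 ≤ M t := by
    filter_upwards [hvpos] with t ht
    simp only [hM]; positivity
  -- Beesack-Das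
  have hBM : ∫ t in Ioc 0 r, B t ≤ ∫ t in Ioc 0 r, M t := by
    have hbd := aux_bd (Q := fun t => ENNReal.ofReal (q t))
      (V := fun t => ENNReal.ofReal (dA n p a a' t)) (U := fun t => ENNReal.ofReal |u t|)
      (D := fun t => ENNReal.ofReal |u' t|) (m := M) hp hl0 hlp hr
      hqmeas.ennreal_ofReal.aemeasurable hvi.aemeasurable.ennreal_ofReal
      ((hu'c.abs.mono Ioc_subset_Icc_self).aemeasurable measurableSet_Ioc).ennreal_ofReal
      (by filter_upwards [hvpos] with t ht
          exact ⟨by simpa using ht, ENNReal.ofReal_ne_top⟩)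
      (by
        intro t ht
        have h1 := (huAC r hr hrR).2 t (Ioc_subset_Icc_self ht)
        rw [hu0, zero_add, intervalIntegral.integral_of_le ht.1.le] at h1
        have h2 := enorm_integral_le_lintegral_enorm (μ := volume.restrict (Ioc 0 t)) u'
        rw [← h1] at h2
        simpa only [Real.enorm_eq_ofReal_abs] using h2)
      hMi hM0
      (by filter_upwards [hvpos] with t ht
          simp only [hM]
          rw [ENNReal.ofReal_mul ht.le, ENNReal.ofReal_rpow_of_nonneg (abs_nonneg _) hp0.le])
    have hK' : ENNReal.ofReal (((p - l) / p) ^ ((p - l) / p)) *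
        (∫⁻ t in Ioc 0 r, ENNReal.ofReal (q t) ^ (p / l) *
          ENNReal.ofReal (dA n p a a' t) ^ (-((p - l) / l)) *
          (∫⁻ σ in Ioc 0 t, ENNReal.ofReal (dA n p a a' σ) ^ (-(1 / (p - 1)))) ^ (p - 1)) ^ (l / p)
        ≤ 1 := by
      refine le_trans ?_ hK
      unfold BDK
      gcongr
    have h2 := hbd.trans (mul_le_of_le_one_left' hK')
    have h3 : ∫⁻ t in Ioc 0 r, ENNReal.ofReal (B t) = ∫⁻ t in Ioc 0 r,
        ENNReal.ofReal (q t) * ENNReal.ofReal |u t| ^ l * ENNReal.ofReal |u' t| ^ (p - l) := by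
      refine lintegral_congr_ae ?_
      filter_upwards [hq0] with t ht
      simp only [hB]
      rw [ENNReal.ofReal_mul ht, ENNReal.ofReal_mul (by positivity),
        ENNReal.ofReal_rpow_of_nonneg (abs_nonneg _) hl0.le,
        ENNReal.ofReal_rpow_of_nonneg (abs_nonneg _) hpl.le, mul_assoc]
    rw [← h3, ← ofReal_integral_eq_lintegral_ofReal hBi hB0,
      ← ofReal_integral_eq_lintegral_ofReal hMi hM0,
      ENNReal.ofReal_le_ofReal_iff (integral_nonneg_of_ae hM0)] at h2
    exact h2
  -- pointwise inequality
  have hne : ∀ᵐ x ∂(volume.restrict (Ioc 0 r)), x ≠ r :=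
    ae_restrict_of_ae (by simp [ae_iff])
  have hle : ∫ t in Ioc 0 r, ((1 - 1 / p) *
      (a' t * ‖PhiP p (u' t)‖ ^ P + a t * (P * ‖PhiP p (u' t)‖ ^ (P - 2) * PhiP p (u' t) * v' t))
      + φ (u t) * u' t) ≤ ∫ t in Ioc 0 r, θ * (B t - M t) := by
    refine integral_mono_ae hEi ((hBi.sub hMi).const_mul θ) ?_
    filter_upwards [hODE, hgrowth, hne, ae_restrict_mem measurableSet_Ioc, ae_restrict_of_ae had,
      ae_restrict_of_ae hvd, ae_restrict_of_ae hwd] with t h1 h2 h3 h4 h5 h6 h7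
    have ht : t ∈ Ioo 0 r := ⟨h4.1, lt_of_le_of_ne h4.2 h3⟩
    have hw : w' t = a' t * PhiP p (u' t) + a t * v' t :=
      (h7 ht).unique ((h5 ht).mul (h6 ht))
    have h2' := h2 (u t) (u' t)
    have e1 : ‖PhiP p (u' t)‖ ^ P = |u' t| ^ p := aux_Phi_pow hp _
    have e2 : ‖PhiP p (u' t)‖ ^ (P - 2) * PhiP p (u' t) = u' t := aux_Phi_inv hp _
    have e3 := aux_Phi_mul hp (u' t)
    have e4 : (1 - 1 / p) * P = 1 := by rw [hP]; field_simp
    have e5 : P * ‖PhiP p (u' t)‖ ^ (P - 2) * PhiP p (u' t) = P * u' t := by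
      rw [mul_assoc, e2]
    simp only [hB, hM]
    rw [e1, e5]
    have h1' : h t (u t) (u' t) * u' t = (a' t * PhiP p (u' t) + a t * v' t) * u' t
        + (n - 1) * (a t / t) * (PhiP p (u' t) * u' t) + φ (u t) * u' t := by
      rw [← hw]; linear_combination (-u' t) * h1
    rw [h1', e3] at h2'
    have e6 : (1 - 1 / p) * (a' t * |u' t| ^ p + a t * (P * u' t * v' t)) + φ (u t) * u' t
        = (a' t * PhiP p (u' t) + a t * v' t) * u' t + (n - 1) * (a t / t) * |u' t| ^ p
          + φ (u t) * u' t - dA n p a a' t * |u' t| ^ p := by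
      unfold dA
      linear_combination (a t * u' t * v' t) * e4 - a' t * e3
    rw [e6]
    linarith
  rw [hEint, integral_const_mul, integral_sub hBi hMi] at hle
  have hfin : θ * ((∫ t in Ioc 0 r, B t) - ∫ t in Ioc 0 r, M t) ≤ 0 :=
    mul_nonpos_of_nonneg_of_nonpos hθ0.le (by linarith)
  have hG0 : G 0 = 0 := by simp [hGdef]
  have hGabs : G |u r| = G (u r) := by
    rcases abs_choice (u r) with h | h
    · rw [h]
    · rw [h]
      simp only [hGdef]
      have := intervalIntegral.integral_comp_neg (a := 0) (b := u r) φ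
      simp only [hφodd, neg_zero, intervalIntegral.integral_neg] at this
      rw [intervalIntegral.integral_symm, ← this, neg_neg]
  simp only [Pi.add_apply, Pi.mul_apply, hu0, hG0, Real.norm_eq_abs] at hle
  rw [aux_Phi_pow hp, aux_Phi_pow hp] at hle
  have hpos : 0 ≤ (1 - 1 / p) * (a r * |u' r| ^ p) := by
    have : 0 ≤ 1 - 1 / p := by
      rw [sub_nonneg, div_le_one hp0]; exact hp.le
    positivity
  change G |u r| ≤ _
  rw [hGabs]
  linarith
end
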